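/- For all 1 ≤ i ≠ j ≤ n and 1 ≤ k ≠ l ≤ n, the following identities of operators on L hold: e_{ij}e_{kl} − e_{il}e_{kj} = e_{il}S^τ_{jk} − e_{ij}S^τ_{lk}, and e_{ij}e_{kl} − e_{kj}e_{il} = S^τ_{jk}e_{il} − S^τ_{ji}e_{kl}. -/

import Mathlib

noncomputable section

/-- The Laurent polynomial ring `R[X₁^{±1}, …, Xₙ^{±1}]` in `n` variables over `R`,
realised as the monoid algebra of the additive monoid `Fin n →₀ ℤ` of exponent vectors. -/
abbrev Laur (R : Type*) [CommRing R] (n : ℕ) : Type _ :=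
  AddMonoidAlgebra R (Fin n →₀ ℤ)

variable {R : Type*} [CommRing R] {n : ℕ}

/-- The monomial `c · X^a`. -/
def mono (a : Fin n →₀ ℤ) (c : R) : Laur R n := AddMonoidAlgebra.single a c

/-- The generator `X_i`. -/
def Xel (i : Fin n) : Laur R n := mono (Finsupp.single i 1) 1

/-- The element `X_i⁻¹`. -/
def XinvEl (i : Fin n) : Laur R n := mono (Finsupp.single i (-1)) 1

/-- Multiplication by a Laurent polynomial, as a linear endomorphism. -/
def mulOp (x : Laur R n) : Module.End R (Laur R n) := LinearMap.mulLeft R x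

/-- The operator of multiplication by `X_i`, with `ℕ`-indexing (`0`-based; junk value `1`
out of range). -/
def XOp (i : ℕ) : Module.End R (Laur R n) :=
  if h : i < n then mulOp (Xel ⟨i, h⟩) else 1

/-- The operator of multiplication by `X_i⁻¹`, with `ℕ`-indexing. -/
def XinvOp (i : ℕ) : Module.End R (Laur R n) :=
  if h : i < n then mulOp (XinvEl ⟨i, h⟩) else 1

/-- Ascending product `f s * f (s+1) * ⋯ * f (s+len-1)` (equal to `1` when `len = 0`). -/
def aF {M : Type*} [Monoid M] (f : ℕ → M) (s len : ℕ) : M :=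
  ((List.range' s len).map f).prod

/-- Descending product `f (s+len-1) * ⋯ * f (s+1) * f s` (equal to `1` when `len = 0`). -/
def dF {M : Type*} [Monoid M] (f : ℕ → M) (s len : ℕ) : M :=
  (((List.range' s len).map f).reverse).prod

/-- Integer power `u^z`, where `v` is a designated (two-sided) inverse of `u`. -/
def zpowOp {M : Type*} [Monoid M] (u v : M) (z : ℤ) : M :=
  if 0 ≤ z then u ^ z.toNat else v ^ (-z).toNat

/-!
The operators `D_i = T_i ⋯ T_{n-1} D_n T_{n-1} ⋯ T_i` are the Jucys–Murphy elements formed from the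
`T_k` and `D_n`. Such elements commute pairwise as soon as `T_1, …, T_{n-1}, D_n` satisfy the braid
relations of type `B_n`. The relation that takes work is the one of the double bond,
`t D_n t D_n = D_n t D_n t` for `t = T_{n-1}`. Put `A = X_n⁻¹`, `Y = Y_n` and
`Y' = t Y t = Y_{n-1}`. From `t A Y' = Y t A` one gets, up to a scalar,
`t D_n t D_n = t A t A (Y' - Y'⁻¹) (Y - Y⁻¹)`. The product of the last two factors is a Laurent
polynomial symmetric in `Y` and `Y'`, hence commutes with `t` by the Hecke relation, and `A` itself
satisfies `t A t A = A t A t`. Expanding the brackets, `D_j D_l = D_l D_j` gives the first family of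
quadratic relations and `X_i X_k = X_k X_i` the second.
-/

section Words

variable {M : Type*} [Monoid M]

lemma aF_succ (f : ℕ → M) (s len : ℕ) : aF f s (len + 1) = aF f s len * f (s + len) := by
  simp [aF, List.range'_concat]

lemma aF_succ' (f : ℕ → M) (s len : ℕ) : aF f s (len + 1) = f s * aF f (s + 1) len := by
  simp [aF, List.range'_succ]

lemma dF_succ' (f : ℕ → M) (s len : ℕ) : dF f s (len + 1) = dF f (s + 1) len * f s := by
  simp [dF, List.range'_succ]

lemma aF_add (f : ℕ → M) (s k l : ℕ) : aF f s (k + l) = aF f s k * aF f (s + k) l := by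
  simp [aF, ← List.range'_append_1]

lemma commute_aF {f : ℕ → M} {x : M} {s len : ℕ}
    (h : ∀ k, s ≤ k → k < s + len → Commute x (f k)) : Commute x (aF f s len) :=
  Commute.list_prod_right _ _ fun y hy ↦ by
    obtain ⟨k, hk, rfl⟩ := List.mem_map.1 hy
    obtain ⟨hsk, hks⟩ := List.mem_range'_1.1 hk
    exact h k hsk hks

end Words

section Braid

variable {M : Type*} [Monoid M] {N : ℕ} {T : ℕ → M} {E : M}

/-- The elements `T 0, …, T (N - 1)` satisfy the braid relations of type `A_N`. -/
structure IsBraid (N : ℕ) (T : ℕ → M) : Prop where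
  braid : ∀ k, k + 1 < N → T k * T (k + 1) * T k = T (k + 1) * T k * T (k + 1)
  commute_T : ∀ i j, i + 1 < j → j < N → Commute (T i) (T j)

/-- The elements `T 0, …, T (N - 1), E` satisfy the braid relations of type `B_{N+1}`, in which `E`
is joined to `T (N - 1)` by the double bond. The relation `t E t E = E t E t` of that bond is
written as the commutation of `t E t` with `E`. -/
structure IsBraidB (N : ℕ) (T : ℕ → M) (E : M) : Prop extends IsBraid N T where
  commute_E : ∀ k, k + 1 < N → Commute (T k) E
  commute_conj : ∀ k, k + 1 = N → Commute (T k * E * T k) E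

/-- The `i`-th Jucys–Murphy element `T_i ⋯ T_{N-1} E T_{N-1} ⋯ T_i` (for `0 ≤ i ≤ N`) of the braid
group of type `B_{N+1}`; the operators `D_i` are of this form. -/
def jucysMurphy (N : ℕ) (T : ℕ → M) (E : M) (i : ℕ) : M := aF T i (N - i) * E * dF T i (N - i)

lemma jucysMurphy_self (N : ℕ) (T : ℕ → M) (E : M) : jucysMurphy N T E N = E := by
  simp [jucysMurphy, aF, dF]

lemma jucysMurphy_of_lt {i : ℕ} (hi : i < N) :
    jucysMurphy N T E i = T i * jucysMurphy N T E (i + 1) * T i := by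
  rw [jucysMurphy, jucysMurphy, show N - i = N - (i + 1) + 1 by omega, aF_succ', dF_succ']
  simp only [mul_assoc]

namespace IsBraid

variable (hT : IsBraid N T)
include hT

lemma semiconjBy_mul_succ {k : ℕ} (hk : k + 1 < N) :
    SemiconjBy (T k * T (k + 1)) (T k) (T (k + 1)) := by
  rw [SemiconjBy, hT.braid k hk, mul_assoc]

lemma semiconjBy_succ_mul {k : ℕ} (hk : k + 1 < N) :
    SemiconjBy (T (k + 1) * T k) (T (k + 1)) (T k) := by
  rw [SemiconjBy, ← hT.braid k hk, mul_assoc]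

end IsBraid

namespace IsBraidB

variable (hE : IsBraidB N T E)
include hE

lemma commute_T_jucysMurphy_of_lt {k j : ℕ} (hkj : k + 1 < j) (hj : j ≤ N) :
    Commute (T k) (jucysMurphy N T E j) := by
  induction hj using Nat.decreasingInduction with
  | self => rw [jucysMurphy_self]; exact hE.commute_E k hkj
  | of_succ j hj ih =>
    have hTT := hE.commute_T k j hkj hj
    rw [jucysMurphy_of_lt hj]
    exact (hTT.mul_right (ih (by omega))).mul_right hTT

lemma commute_T_jucysMurphy_of_gt {k j : ℕ} (hjk : j < k) (hk : k < N) :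
    Commute (T k) (jucysMurphy N T E j) := by
  induction hjk.le using Nat.decreasingInduction with
  | self => exact absurd hjk (lt_irrefl k)
  | of_succ j hj ih =>
    rw [jucysMurphy_of_lt (by omega)]
    rcases Nat.lt_or_ge (j + 1) k with hjk' | hkj
    · have hTT := (hE.commute_T j k hjk' hk).symm
      exact (hTT.mul_right (ih hjk')).mul_right hTT
    · obtain rfl : k = j + 1 := by omega
      have hJ : SemiconjBy (jucysMurphy N T E (j + 2)) (T j) (T j) :=
        (hE.commute_T_jucysMurphy_of_lt (by omega) hk).symm
      have hconj : Commute (T j * T (j + 1) * jucysMurphy N T E (j + 2) * (T (j + 1) * T j))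
          (T (j + 1)) :=
        ((hE.semiconjBy_mul_succ hk).mul_left hJ).mul_left (hE.semiconjBy_succ_mul hk)
      rw [jucysMurphy_of_lt hk]
      simpa only [mul_assoc] using hconj.symm

lemma commute_jucysMurphy_self {i : ℕ} (hi : i ≤ N) : Commute (jucysMurphy N T E i) E := by
  induction hi using Nat.decreasingInduction with
  | self => rw [jucysMurphy_self]
  | of_succ i hi ih =>
    rw [jucysMurphy_of_lt hi]
    rcases Nat.lt_or_ge (i + 1) N with hiN | hNi
    · have hTE := hE.commute_E i hiN
      exact (hTE.mul_left ih).mul_left hTE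
    · obtain rfl : N = i + 1 := by omega
      rw [jucysMurphy_self]
      exact hE.commute_conj i rfl

theorem commute_jucysMurphy {i j : ℕ} (hi : i ≤ N) (hj : j ≤ N) :
    Commute (jucysMurphy N T E i) (jucysMurphy N T E j) := by
  wlog hij : i < j generalizing i j
  · rcases (not_lt.1 hij).eq_or_lt with rfl | hji
    exacts [Commute.refl _, (this hj hi hji).symm]
  induction hj using Nat.decreasingInduction with
  | self => rw [jucysMurphy_self]; exact hE.commute_jucysMurphy_self hi
  | of_succ j hj ih =>
    have hTJ := (hE.commute_T_jucysMurphy_of_gt hij hj).symm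
    rw [jucysMurphy_of_lt hj]
    exact (hTJ.mul_right (ih (by omega))).mul_right hTJ

end IsBraidB

end Braid

section RankTwo

variable {B : Type*} [Ring B] [Algebra R B] {h : R} {t Y : Bˣ}

lemma commute_mul_add_mul_inv (ht : (t - ↑t⁻¹ : B) = h • 1) (w : B) :
    Commute (t : B) (t * w + w * ↑t⁻¹) := by
  have ht' : (t : B) = ↑t⁻¹ + h • 1 := by rw [← ht]; abel
  calc (t : B) * (t * w + w * ↑t⁻¹)
      = (↑t⁻¹ + h • 1) * (t * w) + t * w * ↑t⁻¹ := by rw [← ht', mul_add, mul_assoc (t : B)]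
    _ = t * w * (↑t⁻¹ + h • 1) + w * ↑t⁻¹ * t := by
      simp [add_mul, mul_add]
      abel
    _ = (t * w + w * ↑t⁻¹) * t := by rw [← ht', add_mul]

lemma commute_mul_inv_add_inv_mul (ht : (t - ↑t⁻¹ : B) = h • 1) (hY : Commute (t * Y * t) Y) :
    Commute (t : B) (↑(t * Y * t * Y⁻¹) + ↑((t * Y * t)⁻¹ * Y)) := by
  set w : B := ↑(Y * t⁻¹ * Y⁻¹) with hw
  have hconj : (Y * t * ↑Y⁻¹ : B) = w + h • 1 := by
    rw [eq_add_of_sub_eq' ht, mul_add, add_mul]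
    simp [hw]
  have hfirst : (↑(t * Y * t * Y⁻¹) : B) = t * w + h • t := by
    rw [← mul_one (h • (t : B)), smul_mul_assoc, ← mul_smul_comm, ← mul_add, ← hconj]
    simp [mul_assoc]
  have hsecond : (↑((t * Y * t)⁻¹ * Y) : B) = w * ↑t⁻¹ := by
    rw [hY.inv_left.eq]
    simp [hw, mul_assoc]
  rw [hfirst, hsecond, add_right_comm]
  exact (commute_mul_add_mul_inv ht w).add_right ((Commute.refl _).smul_right h)

/-- The second factor is `(Y' - Y'⁻¹) (Y - Y⁻¹)` with `Y' = t Y t`. It is symmetric in `Y` and `Y'`,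
and `t` commutes with symmetric Laurent polynomials in these two. -/
lemma commute_sub_inv_mul_sub_inv (ht : (t - ↑t⁻¹ : B) = h • 1)
    (hY : Commute (t * Y * t) Y) :
    Commute (t : B) ((↑(t * Y * t) - ↑(t * Y * t)⁻¹) * (Y - ↑Y⁻¹)) := by
  have hprod : Commute t (t * Y * t * Y) := by
    rw [commute_iff_eq]; conv_lhs => rw [hY.eq]
    simp only [mul_assoc]
  have hexpand : (↑(t * Y * t) - ↑(t * Y * t)⁻¹) * (Y - ↑Y⁻¹ : B) =
      ↑(t * Y * t * Y) + ↑(t * Y * t * Y)⁻¹ - (↑(t * Y * t * Y⁻¹) + ↑((t * Y * t)⁻¹ * Y)) := by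
    rw [hY.mul_inv]
    simp only [Units.val_mul, sub_mul, mul_sub]
    abel
  rw [hexpand]
  exact ((hprod.units_val).add_right hprod.inv_right.units_val).sub_right
    (commute_mul_inv_add_inv_mul ht hY)

theorem commute_conj_mul_sub_inv {A : B} (ht : (t - ↑t⁻¹ : B) = h • 1)
    (hA : Commute (t * A * t) A) (hY : Commute (t * Y * t) Y)
    (hYA : SemiconjBy (Y * t : B) A (t * A * t)) :
    Commute (t * (A * (Y - ↑Y⁻¹)) * t) (A * (Y - ↑Y⁻¹)) := by
  have hZ := commute_sub_inv_mul_sub_inv ht hY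
  set Z : B := (↑(t * Y * t) - ↑(t * Y * t)⁻¹) * (Y - ↑Y⁻¹) with hZdef
  have hAY : SemiconjBy (t * A) ↑(t * Y * t) (Y : B) := by
    simpa [SemiconjBy, mul_assoc] using hYA.eq.symm
  have hAsub : SemiconjBy (t * A) (↑(t * Y * t) - ↑(t * Y * t)⁻¹) (Y - ↑Y⁻¹ : B) :=
    hAY.sub_right hAY.units_inv_right
  rw [commute_iff_eq]
  calc t * (A * (Y - ↑Y⁻¹)) * t * (A * (Y - ↑Y⁻¹))
      = t * A * ((Y - ↑Y⁻¹) * (t * A)) * (Y - ↑Y⁻¹) := by simp only [mul_assoc]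
    _ = t * A * t * A * Z := by rw [← hAsub.eq, hZdef]; simp only [mul_assoc]
    _ = A * t * A * (t * Z) := by rw [hA.eq]; simp only [mul_assoc]
    _ = A * (t * A * (↑(t * Y * t) - ↑(t * Y * t)⁻¹)) * (Y - ↑Y⁻¹) * t := by
      rw [hZ.eq, hZdef]; simp only [mul_assoc]
    _ = A * (Y - ↑Y⁻¹) * (t * (A * (Y - ↑Y⁻¹)) * t) := by
      rw [hAsub.eq]; simp only [mul_assoc]

end RankTwo
section DoubleAffineHecke

variable {B : Type*} [Ring B] [Algebra R B] {N : ℕ} {h : R} {T S X V : ℕ → B} {p : B}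

/-- The elements `T k`, `S k = (T k)⁻¹` for `k < N`, `X i`, `V i = (X i)⁻¹` for `i ≤ N` and `p`, the
last one in the role of `π⁻¹`, satisfy those relations of the double affine Hecke algebra of type
`GL_{N+1}` that do not involve `q`: the relation `π⁻¹ X_1 = q X_n π⁻¹` is left out. The scalar `h`
stands for `τ - τ⁻¹`. -/
structure IsDoubleAffineHecke (N : ℕ) (h : R) (T S X V : ℕ → B) (p : B) : Prop
    extends IsBraid N T where
  T_mul_inv : ∀ k, k < N → T k * S k = 1
  inv_mul_T : ∀ k, k < N → S k * T k = 1
  T_sub_inv : ∀ k, k < N → T k - S k = h • 1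
  X_mul_inv : ∀ i, i ≤ N → X i * V i = 1
  inv_mul_X : ∀ i, i ≤ N → V i * X i = 1
  commute_X : ∀ i j, i ≤ N → j ≤ N → Commute (X i) (X j)
  T_mul_X_mul_T : ∀ k, k < N → T k * X k * T k = X (k + 1)
  commute_T_X : ∀ k j, k < N → j ≤ N → j ≠ k → j ≠ k + 1 → Commute (T k) (X j)
  semiconjBy_p_X : ∀ k, k < N → SemiconjBy p (X (k + 1)) (X k)
  semiconjBy_p_T : ∀ k, k + 1 < N → SemiconjBy p (T (k + 1)) (T k)
  semiconjBy_p_sq_T : ∀ k, k + 1 = N → SemiconjBy (p * p) (T 0) (T k)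

namespace IsDoubleAffineHecke

variable (H : IsDoubleAffineHecke N h T S X V p)

/-- The generator `T k` as a unit. -/
def unitT {k : ℕ} (hk : k < N) : Bˣ := ⟨T k, S k, H.T_mul_inv k hk, H.inv_mul_T k hk⟩

/-- The generator `X i` as a unit. -/
def unitX {i : ℕ} (hi : i ≤ N) : Bˣ := ⟨X i, V i, H.X_mul_inv i hi, H.inv_mul_X i hi⟩

include H

lemma commute_inv_of_commute {x : B} {k : ℕ} (hk : k < N) (hx : Commute x (T k)) :
    Commute x (S k) :=
  Commute.units_inv_right (u := H.unitT hk) hx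

lemma semiconjBy_inv_mul_inv_succ {k : ℕ} (hk : k + 1 < N) :
    SemiconjBy (S k * S (k + 1)) (T k) (T (k + 1)) :=
  SemiconjBy.units_inv_symm_left
    (a := H.unitT hk * H.unitT (by omega : k < N)) (H.semiconjBy_succ_mul hk)

lemma semiconjBy_inv_succ_mul_inv {k : ℕ} (hk : k + 1 < N) :
    SemiconjBy (S (k + 1) * S k) (T (k + 1)) (T k) :=
  SemiconjBy.units_inv_symm_left
    (a := H.unitT (by omega : k < N) * H.unitT hk) (H.semiconjBy_mul_succ hk)

lemma semiconjBy_aF_inv {k : ℕ} (hk : k + 1 < N) : SemiconjBy (aF S 0 N) (T k) (T (k + 1)) := by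
  have hhead : SemiconjBy (aF S 0 k) (T (k + 1)) (T (k + 1)) := Commute.symm <|
    commute_aF fun i _ hi ↦
      H.commute_inv_of_commute (by omega) (H.commute_T i (k + 1) (by omega) hk).symm
  have htail : SemiconjBy (aF S (k + 2) (N - (k + 2))) (T k) (T k) := Commute.symm <|
    commute_aF fun i hki _ ↦
      H.commute_inv_of_commute (by omega) (H.commute_T k i (by omega) (by omega))
  have hsplit : aF S 0 N = aF S 0 k * (S k * S (k + 1)) * aF S (k + 2) (N - (k + 2)) := by
    conv_lhs => rw [show N = k + 2 + (N - (k + 2)) by omega, aF_add, aF_succ, aF_succ]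
    simp only [zero_add, mul_assoc]
  rw [hsplit]
  exact (hhead.mul_left (H.semiconjBy_inv_mul_inv_succ hk)).mul_left htail

lemma semiconjBy_aF_one_mul_aF_zero {m : ℕ} (hm : m < N) :
    SemiconjBy (aF S 1 m * aF S 0 m) (T m) (T 0) := by
  induction m with
  | zero => simp [aF]
  | succ m ih =>
    have hcomm : Commute (S (m + 1)) (aF S 0 m) := commute_aF fun i _ hi ↦
      H.commute_inv_of_commute (by omega) (H.commute_inv_of_commute hm
        (H.commute_T i (m + 1) (by omega) hm)).symm
    have hsplit : aF S 1 (m + 1) * aF S 0 (m + 1) = aF S 1 m * aF S 0 m * (S (m + 1) * S m) := by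
      rw [aF_succ, aF_succ, zero_add, add_comm 1 m, mul_assoc, ← mul_assoc (S (m + 1)), hcomm.eq]
      simp only [mul_assoc]
    rw [hsplit]
    exact (ih (by omega)).mul_left (H.semiconjBy_inv_succ_mul_inv hm)

lemma semiconjBy_p_aF {m : ℕ} (hm : m < N) : SemiconjBy p (aF S 1 m) (aF S 0 m) := by
  induction m with
  | zero => simp [aF]
  | succ m ih =>
    have hpS : SemiconjBy p (S (m + 1)) (S m) := SemiconjBy.units_inv_right
      (x := H.unitT hm) (y := H.unitT (by omega : m < N))
      (H.semiconjBy_p_T m hm)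
    rw [aF_succ, aF_succ, zero_add, add_comm 1 m]
    exact (ih (by omega)).mul_right hpS

lemma aF_inv_mul_T {k : ℕ} (hk : k + 1 = N) : aF S 0 N * T k = aF S 0 k := by
  subst hk
  rw [aF_succ, zero_add, mul_assoc, H.inv_mul_T k (by omega), mul_one]

lemma T_mul_inv_X_succ_mul_T {k : ℕ} (hk : k < N) : T k * V (k + 1) * T k = V k := by
  have hX : H.unitT hk * H.unitX hk.le * H.unitT hk = H.unitX hk :=
    Units.ext (H.T_mul_X_mul_T k hk)
  have hV : H.unitT hk * (H.unitX hk)⁻¹ * H.unitT hk = (H.unitX hk.le)⁻¹ := by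
    rw [← hX]
    group
  exact congrArg Units.val hV

lemma commute_T_inv_X {k j : ℕ} (hk : k < N) (hj : j ≤ N) (hjk : j ≠ k) (hjk' : j ≠ k + 1) :
    Commute (T k) (V j) :=
  Commute.units_inv_right (u := H.unitX hj) (H.commute_T_X k j hk hj hjk hjk')

lemma isBraidB_inv_X : IsBraidB N T (V N) where
  toIsBraid := H.toIsBraid
  commute_E k hk := H.commute_T_inv_X (by omega) le_rfl (by omega) (by omega)
  commute_conj k hk := by
    subst hk
    have hX : Commute (H.unitX (by omega : k ≤ k + 1) : B) (H.unitX le_rfl) :=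
      H.commute_X k (k + 1) (by omega) le_rfl
    rw [H.T_mul_inv_X_succ_mul_T (by omega)]
    exact hX.units_inv_left.units_inv_right

lemma commute_mul_self_p_mul_aF_T {k : ℕ} (hk : k + 1 = N) :
    Commute (p * aF S 0 k * (p * aF S 0 k)) (T k) := by
  have hsq : p * aF S 0 k * (p * aF S 0 k) = p * p * (aF S 1 k * aF S 0 k) := by
    rw [mul_assoc p, ← mul_assoc _ p, ← (H.semiconjBy_p_aF (m := k) (by omega)).eq]
    simp only [mul_assoc]
  have hconj : SemiconjBy (p * p * (aF S 1 k * aF S 0 k)) (T k) (T k) :=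
    (H.semiconjBy_p_sq_T k hk).mul_left (H.semiconjBy_aF_one_mul_aF_zero (by omega))
  rw [hsq]
  exact hconj

lemma isBraidB_p_mul_aF : IsBraidB N T (p * aF S 0 N) where
  toIsBraid := H.toIsBraid
  commute_E k hk := ((H.semiconjBy_p_T k hk).mul_left (H.semiconjBy_aF_inv hk)).symm
  commute_conj k hk := by
    set g := p * aF S 0 k
    have hgg : Commute (g * g) (T k) := H.commute_mul_self_p_mul_aF_T hk
    have hYT : p * aF S 0 N * T k = g := by rw [mul_assoc, H.aF_inv_mul_T hk]
    have hY : p * aF S 0 N = g * S k := by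
      rw [← hYT, mul_assoc, H.T_mul_inv k (by omega), mul_one]
    rw [mul_assoc, hYT, hY, commute_iff_eq]
    calc T k * g * (g * S k) = g * g * (T k * S k) := by
          rw [← mul_assoc (g * g), hgg.eq]; simp only [mul_assoc]
      _ = g * (S k * T k) * g := by
          rw [H.T_mul_inv k (by omega), H.inv_mul_T k (by omega), mul_one, mul_one]
      _ = g * S k * (T k * g) := by simp only [mul_assoc]

lemma semiconjBy_p_mul_aF_mul_T {k : ℕ} (hk : k + 1 = N) :
    SemiconjBy (p * aF S 0 N * T k) (V N) (V k) := by
  subst hk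
  have hS : SemiconjBy (aF S 0 k) (V (k + 1)) (V (k + 1)) := Commute.symm <|
    commute_aF fun i _ hi ↦ H.commute_inv_of_commute (by omega)
      (H.commute_T_inv_X (by omega) le_rfl (by omega) (by omega)).symm
  have hp : SemiconjBy p (V (k + 1)) (V k) := SemiconjBy.units_inv_right
    (x := H.unitX le_rfl) (y := H.unitX (by omega : k ≤ k + 1))
    (H.semiconjBy_p_X k (by omega))
  rw [mul_assoc, H.aF_inv_mul_T rfl]
  exact hp.mul_left hS

theorem isBraidB_smul_inv_X_mul_sub_inv {Y : Bˣ} (hY : ↑Y = p * aF S 0 N) (c : R) :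
    IsBraidB N T (c • (V N * (Y - ↑Y⁻¹))) where
  toIsBraid := H.toIsBraid
  commute_E k hk := by
    have hTY : Commute (T k) Y := hY ▸ H.isBraidB_p_mul_aF.commute_E k hk
    exact ((H.isBraidB_inv_X.commute_E k hk).mul_right
      (hTY.sub_right hTY.units_inv_right)).smul_right c
  commute_conj k hk := by
    let t : Bˣ := H.unitT (by omega : k < N)
    have hV : t * V N * t = V k := hk ▸ H.T_mul_inv_X_succ_mul_T (by omega)
    have htY : Commute (t * Y * t) Y := by
      have := H.isBraidB_p_mul_aF.commute_conj k hk
      rw [← hY] at this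
      exact Units.ext this.eq
    have hYV : SemiconjBy (Y * t : B) (V N) (t * V N * t) := by
      rw [hY, hV]
      exact H.semiconjBy_p_mul_aF_mul_T hk
    have hconj := commute_conj_mul_sub_inv (H.T_sub_inv k (by omega))
      (H.isBraidB_inv_X.commute_conj k hk) htY hYV
    rw [mul_smul_comm, smul_mul_assoc]
    exact (hconj.smul_left c).smul_right c

end IsDoubleAffineHecke

end DoubleAffineHecke

section QuadraticRelations

variable {B : Type*} [Ring B]

lemma mul_mul_mul_sub_of_commute_right {x₁ d₁ x₂ d₂ : B} (hd : Commute d₁ d₂) :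
    x₁ * d₁ * (x₂ * d₂) - x₁ * d₂ * (x₂ * d₁) =
      x₁ * d₂ * (d₁ * x₂ - x₂ * d₁) - x₁ * d₁ * (d₂ * x₂ - x₂ * d₂) := by
  have hx : x₁ * d₁ * (d₂ * x₂) = x₁ * d₂ * (d₁ * x₂) := by
    rw [mul_assoc, ← mul_assoc d₁, hd.eq]; simp only [mul_assoc]
  rw [mul_sub, mul_sub, hx]
  abel

lemma mul_mul_mul_sub_of_commute_left {x₁ d₁ x₂ d₂ : B} (hx : Commute x₁ x₂) :
    x₁ * d₁ * (x₂ * d₂) - x₂ * d₁ * (x₁ * d₂) =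
      (d₁ * x₂ - x₂ * d₁) * (x₁ * d₂) - (d₁ * x₁ - x₁ * d₁) * (x₂ * d₂) := by
  have hd : d₁ * x₂ * (x₁ * d₂) = d₁ * x₁ * (x₂ * d₂) := by
    rw [mul_assoc, ← mul_assoc x₂, ← hx.eq]; simp only [mul_assoc]
  rw [sub_mul, sub_mul, hd]
  abel

end QuadraticRelations

section LaurentPolynomials

lemma isLeftRegular_single_sub_single {G : Type*} [AddCommGroup G] [IsAddTorsionFree G] {a b : G}
    (hab : a ≠ b) :
    IsLeftRegular (AddMonoidAlgebra.single a 1 - AddMonoidAlgebra.single b 1 :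
      AddMonoidAlgebra R G) := by
  refine isLeftRegular_iff_right_eq_zero_of_mul.2 fun x hx ↦ ?_
  have hperiod : Function.Periodic x.coeff (a - b) := fun g ↦ by
    have hcoeff := congrArg (fun y ↦ y.coeff (g + a)) hx
    simp only [sub_mul, AddMonoidAlgebra.coeff_sub, Finsupp.coe_sub, Pi.sub_apply,
      AddMonoidAlgebra.coeff_single_mul_apply, one_mul, AddMonoidAlgebra.coeff_zero,
      Finsupp.coe_zero, Pi.zero_apply, sub_eq_zero] at hcoeff
    rw [show g + (a - b) = -b + (g + a) by abel, ← hcoeff, show -a + (g + a) = g by abel]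
  ext g
  by_contra hg
  have hinj : Function.Injective fun m : ℕ ↦ g + m • (a - b) := fun m m' h ↦
    injective_nsmul_iff_not_isOfFinAddOrder.2
      (not_isOfFinAddOrder_of_isAddTorsionFree (sub_ne_zero.2 hab)) (add_left_cancel h)
  refine Set.infinite_of_injective_forall_mem hinj (s := Function.support x.coeff) (fun m ↦ ?_)
    x.coeff.hasFiniteSupport
  rw [Function.mem_support, hperiod.nsmul m g]
  exact hg

lemma isLeftRegular_Xel_sub_Xel {a b : Fin n} (hab : a ≠ b) :
    IsLeftRegular (Xel b - Xel a : Laur R n) :=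
  isLeftRegular_single_sub_single fun h ↦
    hab (Finsupp.single_left_injective one_ne_zero h).symm

lemma algHom_ext_Xel {A : Type*} [Semiring A] [Algebra R A] {f g : Laur R n →ₐ[R] A}
    (h : ∀ i, f (Xel i) = g (Xel i)) : f = g :=
  (AddMonoidAlgebra.lift R A _).symm.injective <|
    Finsupp.mulHom_ext' fun i ↦ MonoidHom.ext_mint (h i)

lemma linearMap_ext_mono {M : Type*} [AddCommMonoid M] [Module R M] {f g : Laur R n →ₗ[R] M}
    (h : ∀ a c, f (mono a c) = g (mono a c)) : f = g :=
  AddMonoidAlgebra.lhom_ext' fun a ↦ LinearMap.ext (h a)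

/-- The algebra endomorphism `X_i ↦ χ_i X_{w i}`. -/
def monomialAlgHom (χ : Fin n → Rˣ) (w : Equiv.Perm (Fin n)) : Laur R n →ₐ[R] Laur R n :=
  AddMonoidAlgebra.lift R (Laur R n) (Fin n →₀ ℤ)
    { toFun := fun a ↦ mono (Finsupp.equivMapDomain w a.toAdd) (↑(∏ i, χ i ^ a.toAdd i) : R)
      map_one' := by simp [mono, AddMonoidAlgebra.one_def]
      map_mul' := fun a b ↦ by
        simp [mono, AddMonoidAlgebra.single_mul_single, zpow_add, Finset.prod_mul_distrib,
          Finsupp.equivMapDomain_eq_mapDomain, Finsupp.mapDomain_add] }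

variable (χ : Fin n → Rˣ) (w : Equiv.Perm (Fin n))

lemma monomialAlgHom_mono (a : Fin n →₀ ℤ) (c : R) :
    monomialAlgHom χ w (mono a c) =
      (↑(∏ i, χ i ^ a i) : R) • mono (Finsupp.equivMapDomain w a) c := by
  rw [monomialAlgHom, mono, AddMonoidAlgebra.lift_single]
  simp [mono, mul_comm]

lemma monomialAlgHom_Xel (i : Fin n) :
    monomialAlgHom χ w (Xel i) = (χ i : R) • Xel (w i) := by
  rw [Xel, monomialAlgHom_mono, Finset.prod_eq_single i]
  · simp [Xel]
  · intro j _ hj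
    simp [hj.symm]
  · simp

/-- The algebra endomorphism `X_i ↦ X_{w i}` permuting the variables. -/
abbrev permAlgHom (w : Equiv.Perm (Fin n)) : Laur R n →ₐ[R] Laur R n := monomialAlgHom 1 w

lemma permAlgHom_Xel (i : Fin n) : permAlgHom w (Xel i : Laur R n) = Xel (w i) := by
  simp [monomialAlgHom_Xel]

lemma monomialAlgHom_monomialAlgHom (ψ : Fin n → Rˣ) (v : Equiv.Perm (Fin n)) (p : Laur R n) :
    monomialAlgHom χ w (monomialAlgHom ψ v p) = monomialAlgHom (ψ * χ ∘ v) (w * v) p := by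
  refine AlgHom.congr_fun (φ₁ := (monomialAlgHom χ w).comp (monomialAlgHom ψ v))
    (algHom_ext_Xel fun i ↦ ?_) p
  simp [monomialAlgHom_Xel, mul_smul]

lemma permAlgHom_permAlgHom (v : Equiv.Perm (Fin n)) (p : Laur R n) :
    permAlgHom v (permAlgHom w p) = permAlgHom (v * w) p :=
  (monomialAlgHom_monomialAlgHom 1 v 1 w p).trans <| by rw [Pi.one_comp, one_mul]

lemma permAlgHom_one (p : Laur R n) : permAlgHom 1 p = p :=
  AlgHom.congr_fun (φ₂ := AlgHom.id R _) (algHom_ext_Xel fun i ↦ by simp [permAlgHom_Xel]) p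

end LaurentPolynomials

section DemazureLusztig

lemma algebraMap_mul_inv (τ : Rˣ) :
    algebraMap R (Laur R n) τ * algebraMap R (Laur R n) ↑τ⁻¹ = 1 := by
  rw [← map_mul, Units.mul_inv, map_one]

/-- `T` is the Demazure–Lusztig operator of the ordered pair `(a, b)` of variables, that is
`T p = ((τ⁻¹ X_b - τ X_a) s(p) + (τ - τ⁻¹) X_b p) / (X_b - X_a)` where `s` swaps `X_a` and `X_b`,
with the denominator cleared. -/
def IsDemazureLusztig (τ : Rˣ) (a b : Fin n) (T : Module.End R (Laur R n)) : Prop :=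
  ∀ p, (Xel b - Xel a) * T p =
    ((↑τ⁻¹ : R) • Xel b - (τ : R) • Xel a) * permAlgHom (Equiv.swap a b) p +
      ((τ : R) - ↑τ⁻¹) • (Xel b * p)

/-- Both sides of the braid relation for two operators `T p = (a s(p) + b p) / d` have an expansion
of this form; for Demazure–Lusztig operators the two expansions agree. -/
lemma mul_braid_apply {A : Type*} [CommRing A] {s₁ s₂ : A →+* A} {T₁ T₂ : A → A}
    {d₁ d₂ g a₁ b₁ a₂ b₂ : A} (hT₁ : ∀ p, d₁ * T₁ p = a₁ * s₁ p + b₁ * p)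
    (hT₂ : ∀ p, d₂ * T₂ p = a₂ * s₂ p + b₂ * p) (hs₁ : ∀ p, s₁ (s₁ p) = p) (hs₁d₁ : s₁ d₁ = -d₁)
    (hs₁d₂ : s₁ d₂ = g) (hs₂d₁ : s₂ d₁ = g) (p : A) :
    d₁ * d₁ * g * d₂ * T₁ (T₂ (T₁ p)) =
      a₁ * (s₁ a₂ * d₁ * (s₁ (s₂ a₁) * s₁ (s₂ (s₁ p)) + s₁ (s₂ b₁) * s₁ (s₂ p)) -
        s₁ b₂ * d₂ * (s₁ a₁ * p + s₁ b₁ * s₁ p)) +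
      b₁ * (a₂ * d₁ * (s₂ a₁ * s₂ (s₁ p) + s₂ b₁ * s₂ p) + b₂ * g * (a₁ * s₁ p + b₁ * p)) := by
  have hs₁g : s₁ g = d₂ := by rw [← hs₁d₂, hs₁]
  have hs₂T₁ : g * s₂ (T₁ p) = s₂ a₁ * s₂ (s₁ p) + s₂ b₁ * s₂ p := by
    simpa only [map_mul, map_add, hs₂d₁] using congrArg s₂ (hT₁ p)
  have hT₂T₁ : d₁ * g * d₂ * T₂ (T₁ p) =
      a₂ * d₁ * (s₂ a₁ * s₂ (s₁ p) + s₂ b₁ * s₂ p) + b₂ * g * (a₁ * s₁ p + b₁ * p) := by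
    linear_combination d₁ * g * hT₂ (T₁ p) + a₂ * d₁ * hs₂T₁ + b₂ * g * hT₁ p
  have hs₁T₂T₁ : d₁ * g * d₂ * s₁ (T₂ (T₁ p)) =
      s₁ a₂ * d₁ * (s₁ (s₂ a₁) * s₁ (s₂ (s₁ p)) + s₁ (s₂ b₁) * s₁ (s₂ p)) -
        s₁ b₂ * d₂ * (s₁ a₁ * p + s₁ b₁ * s₁ p) := by
    have h := congrArg s₁ hT₂T₁
    simp only [map_mul, map_add, hs₁, hs₁d₁, hs₁d₂, hs₁g] at h
    linear_combination -h
  linear_combination d₁ * g * d₂ * hT₁ (T₂ (T₁ p)) + a₁ * hs₁T₂T₁ + b₁ * hT₂T₁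

namespace IsDemazureLusztig

variable {τ : Rˣ} {a b a' b' : Fin n} {T T' : Module.End R (Laur R n)}

lemma semiconjBy (hT : IsDemazureLusztig τ a b T) (hT' : IsDemazureLusztig τ a' b' T')
    (hab' : a' ≠ b') {f : Module.End R (Laur R n)} (r : Rˣ)
    (hfa : ∀ p, f (Xel a * p) = (r : R) • (Xel a' * f p))
    (hfb : ∀ p, f (Xel b * p) = (r : R) • (Xel b' * f p))
    (hfs : ∀ p, f (permAlgHom (Equiv.swap a b) p) = permAlgHom (Equiv.swap a' b') (f p)) :
    SemiconjBy f T T' := by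
  refine LinearMap.ext fun p ↦ isLeftRegular_Xel_sub_Xel hab' ?_
  refine r.isUnit.smul_left_cancel.1 ?_
  calc (r : R) • ((Xel b' - Xel a') * f (T p)) = f ((Xel b - Xel a) * T p) := by
        simp only [sub_mul, map_sub, hfa, hfb, smul_sub]
    _ = (r : R) • ((Xel b' - Xel a') * T' (f p)) := by
        simp only [hT p, hT' (f p), sub_mul, map_sub, map_add, map_smul, smul_mul_assoc, hfa, hfb,
          hfs, smul_sub, smul_add, smul_comm (r : R)]

lemma commute_mulOp_Xel (hT : IsDemazureLusztig τ a b T) (hab : a ≠ b) {c : Fin n} (hca : c ≠ a)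
    (hcb : c ≠ b) : Commute T (mulOp (Xel c)) :=
  Commute.symm <| hT.semiconjBy hT hab 1 (fun p ↦ by simp [mulOp, mul_left_comm])
    (fun p ↦ by simp [mulOp, mul_left_comm])
    (fun p ↦ by simp [mulOp, permAlgHom_Xel, Equiv.swap_apply_of_ne_of_ne hca hcb])

lemma semiconjBy_monomialAlgHom (hT : IsDemazureLusztig τ a b T)
    {χ : Fin n → Rˣ} {w : Equiv.Perm (Fin n)} (hT' : IsDemazureLusztig τ (w a) (w b) T')
    (hab : a ≠ b) (hχ : χ a = χ b) :
    SemiconjBy (monomialAlgHom χ w).toLinearMap T T' := by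
  refine hT.semiconjBy hT' (w.injective.ne hab) (χ a) (fun p ↦ ?_) (fun p ↦ ?_) fun p ↦ ?_
  · simp [monomialAlgHom_Xel]
  · simp [monomialAlgHom_Xel, hχ]
  · have hχswap : χ ∘ Equiv.swap a b = χ := by
      ext1 i
      simp only [Function.comp_apply, Equiv.swap_apply_def]
      split_ifs <;> simp_all
    simp only [AlgHom.toLinearMap_apply]
    rw [monomialAlgHom_monomialAlgHom, monomialAlgHom_monomialAlgHom, hχswap, one_mul,
      Pi.one_comp, mul_one, Equiv.mul_swap_eq_swap_mul]

lemma commute (hT : IsDemazureLusztig τ a b T) (hT' : IsDemazureLusztig τ a' b' T') (hab : a ≠ b)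
    (hab' : a' ≠ b') (haa : a ≠ a') (hba : b ≠ a') (hba' : a ≠ b') (hbb : b ≠ b') :
    Commute T T' := by
  have hs : SemiconjBy (permAlgHom (Equiv.swap a b)).toLinearMap T' T' := by
    refine hT'.semiconjBy_monomialAlgHom ?_ hab' rfl
    rwa [Equiv.swap_apply_of_ne_of_ne haa.symm hba.symm,
      Equiv.swap_apply_of_ne_of_ne hba'.symm hbb.symm]
  refine Commute.symm <| hT.semiconjBy hT hab 1 (fun p ↦ ?_) (fun p ↦ ?_) (fun p ↦ ?_)
  · rw [Units.val_one, one_smul]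
    exact LinearMap.congr_fun (hT'.commute_mulOp_Xel hab' haa hba').eq p
  · rw [Units.val_one, one_smul]
    exact LinearMap.congr_fun (hT'.commute_mulOp_Xel hab' hba hbb).eq p
  · exact (LinearMap.congr_fun hs.eq p).symm

lemma sub_mul_apply (hT : IsDemazureLusztig τ a b T) (p : Laur R n) :
    (Xel b - Xel a) * T p =
      (algebraMap R _ ↑τ⁻¹ * Xel b - algebraMap R _ τ * Xel a) * permAlgHom (Equiv.swap a b) p +
        (algebraMap R _ τ - algebraMap R _ ↑τ⁻¹) * Xel b * p := by
  rw [hT p]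
  simp only [Algebra.smul_def, map_sub, mul_assoc]

lemma sub_mul_permAlgHom_apply (hT : IsDemazureLusztig τ a b T) (p : Laur R n) :
    (Xel b - Xel a) * permAlgHom (Equiv.swap a b) (T p) =
      (algebraMap R _ τ * Xel b - algebraMap R _ ↑τ⁻¹ * Xel a) * p +
        (algebraMap R _ ↑τ⁻¹ - algebraMap R _ τ) * Xel a * permAlgHom (Equiv.swap a b) p := by
  have h := congrArg (permAlgHom (Equiv.swap a b)) (hT.sub_mul_apply p)
  simp only [map_add, map_sub, map_mul, AlgHom.commutes, permAlgHom_Xel, Equiv.swap_apply_left,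
    Equiv.swap_apply_right, permAlgHom_permAlgHom, Equiv.swap_mul_self, permAlgHom_one] at h
  linear_combination -h

lemma mul_self (hT : IsDemazureLusztig τ a b T) (hab : a ≠ b) :
    T * T = 1 + ((τ : R) - ↑τ⁻¹) • T := by
  have hreg := isLeftRegular_Xel_sub_Xel (R := R) hab
  refine LinearMap.ext fun p ↦ (hreg.mul hreg) ?_
  have hTp := hT.sub_mul_apply p
  have hsTp := hT.sub_mul_permAlgHom_apply p
  have hTTp := hT.sub_mul_apply (T p)
  have hτ := algebraMap_mul_inv (n := n) τ
  simp only [Module.End.mul_apply, LinearMap.add_apply, Module.End.one_apply,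
    LinearMap.smul_apply]
  rw [Algebra.smul_def, map_sub]
  set t := algebraMap R (Laur R n) τ
  set u := algebraMap R (Laur R n) ↑τ⁻¹
  linear_combination (Xel b - Xel a) * hTTp + (u * Xel b - t * Xel a) * hsTp +
    (t - u) * Xel b * hTp - (t - u) * (Xel b - Xel a) * hTp + (Xel b - Xel a) ^ 2 * p * hτ

lemma mul_mulOp_Xel_mul (hT : IsDemazureLusztig τ a b T) (hab : a ≠ b) :
    T * mulOp (Xel a) * T = mulOp (Xel b) := by
  have hreg := isLeftRegular_Xel_sub_Xel (R := R) hab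
  refine LinearMap.ext fun p ↦ (hreg.mul hreg) ?_
  have hTp := hT.sub_mul_apply p
  have hsTp := hT.sub_mul_permAlgHom_apply p
  have hTXTp := hT.sub_mul_apply (Xel a * T p)
  have hτ := algebraMap_mul_inv (n := n) τ
  rw [map_mul (permAlgHom _), permAlgHom_Xel, Equiv.swap_apply_left] at hTXTp
  simp only [Module.End.mul_apply, mulOp, LinearMap.mulLeft_apply]
  set t := algebraMap R (Laur R n) τ
  set u := algebraMap R (Laur R n) ↑τ⁻¹
  linear_combination (Xel b - Xel a) * hTXTp + (u * Xel b - t * Xel a) * Xel b * hsTp +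
    (t - u) * Xel b * Xel a * hTp + (Xel b - Xel a) ^ 2 * Xel b * p * hτ

lemma braid {c : Fin n} (hT : IsDemazureLusztig τ a b T) (hT' : IsDemazureLusztig τ b c T')
    (hab : a ≠ b) (hbc : b ≠ c) (hac : a ≠ c) : T * T' * T = T' * T * T' := by
  have hreg := ((((isLeftRegular_Xel_sub_Xel (R := R) hab).mul
    (isLeftRegular_Xel_sub_Xel hab)).mul (isLeftRegular_Xel_sub_Xel hac)).mul
    (isLeftRegular_Xel_sub_Xel hbc)).mul (isLeftRegular_Xel_sub_Xel hbc)
  refine LinearMap.ext fun p ↦ hreg ?_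
  have hac' : Equiv.swap a b c = c := Equiv.swap_apply_of_ne_of_ne hac.symm hbc.symm
  have hba' : Equiv.swap b c a = a := Equiv.swap_apply_of_ne_of_ne hab hac
  have hswap : permAlgHom (Equiv.swap a b) (permAlgHom (Equiv.swap b c)
      (permAlgHom (Equiv.swap a b) p)) = permAlgHom (Equiv.swap b c) (permAlgHom (Equiv.swap a b)
      (permAlgHom (Equiv.swap b c) p)) := by
    simp only [permAlgHom_permAlgHom, ← mul_assoc]
    rw [Equiv.swap_mul_swap_mul_swap hab hac, Equiv.swap_comm a b, Equiv.swap_comm b c,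
      Equiv.swap_mul_swap_mul_swap hbc.symm hac.symm, Equiv.swap_comm]
  have hleft := mul_braid_apply (s₁ := (permAlgHom (Equiv.swap a b)).toRingHom)
    (s₂ := (permAlgHom (Equiv.swap b c)).toRingHom) (g := Xel c - Xel a) hT.sub_mul_apply
    hT'.sub_mul_apply (by simp [permAlgHom_permAlgHom, permAlgHom_one])
    (by simp [monomialAlgHom_Xel])
    (by simp [monomialAlgHom_Xel, hac'])
    (by simp [monomialAlgHom_Xel, hba']) p
  have hright := mul_braid_apply (s₁ := (permAlgHom (Equiv.swap b c)).toRingHom)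
    (s₂ := (permAlgHom (Equiv.swap a b)).toRingHom) (g := Xel c - Xel a) hT'.sub_mul_apply
    hT.sub_mul_apply (by simp [permAlgHom_permAlgHom, permAlgHom_one])
    (by simp [monomialAlgHom_Xel])
    (by simp [monomialAlgHom_Xel, hba'])
    (by simp [monomialAlgHom_Xel, hac']) p
  simp only [AlgHom.toRingHom_eq_coe, RingHom.coe_coe, map_sub, map_mul, AlgHom.commutes,
    permAlgHom_Xel, Equiv.swap_apply_left, Equiv.swap_apply_right, hac', hba', hswap]
    at hleft hright
  simp only [Module.End.mul_apply]
  linear_combination (Xel c - Xel b) * hleft - (Xel b - Xel a) * hright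

end IsDemazureLusztig

end DemazureLusztig

section PolynomialRepresentation

lemma XOp_apply {i : ℕ} (hi : i < n) (p : Laur R n) : XOp i p = Xel ⟨i, hi⟩ * p := by
  simp [XOp, hi, mulOp]

lemma commute_mulOp (x y : Laur R n) : Commute (mulOp x) (mulOp y) :=
  LinearMap.ext fun _ ↦ mul_left_comm x y _

lemma commute_XOp (i j : ℕ) : Commute (XOp i : Module.End R (Laur R n)) (XOp j) := by
  unfold XOp
  split_ifs
  exacts [commute_mulOp _ _, Commute.one_right _, Commute.one_left _, Commute.refl _]

lemma commute_XOp_XinvOp (i : ℕ) : Commute (XOp i : Module.End R (Laur R n)) (XinvOp i) := by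
  unfold XOp XinvOp
  split_ifs
  exacts [commute_mulOp _ _, Commute.refl _]

lemma XOp_mul_XinvOp (i : ℕ) : (XOp i * XinvOp i : Module.End R (Laur R n)) = 1 := by
  unfold XOp XinvOp
  split_ifs with hi
  · have hX : (Xel ⟨i, hi⟩ * XinvEl ⟨i, hi⟩ : Laur R n) = 1 := by
      simp [Xel, XinvEl, mono, AddMonoidAlgebra.single_mul_single,
        AddMonoidAlgebra.one_def]
    rw [mulOp, mulOp, Module.End.mul_eq_comp, ← LinearMap.mulLeft_mul, hX, LinearMap.mulLeft_one,
      Module.End.one_eq_id]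
  · exact mul_one 1

lemma finRotate_symm_succ {k : ℕ} (hk : k + 1 < n) :
    (finRotate n).symm ⟨k + 1, hk⟩ = ⟨k, Nat.lt_of_succ_lt hk⟩ := by
  obtain ⟨m, rfl⟩ : ∃ m, n = m + 1 := ⟨n - 1, by omega⟩
  rw [Equiv.symm_apply_eq, finRotate_of_lt (by omega)]

lemma eq_toLinearMap_permAlgHom {W : Module.End R (Laur R n)} {w : Equiv.Perm (Fin n)}
    (hW : ∀ a c, W (mono a c) = mono (Finsupp.equivMapDomain w a) c) :
    W = (permAlgHom w).toLinearMap :=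
  linearMap_ext_mono fun a c ↦ by simp [hW, monomialAlgHom_mono]

variable [NeZero n]

lemma finRotate_symm_zero : (finRotate n).symm 0 = ⟨n - 1, Nat.sub_one_lt (NeZero.ne n)⟩ := by
  obtain ⟨m, rfl⟩ : ∃ m, n = m + 1 := ⟨n - 1, by have := NeZero.pos n; omega⟩
  rw [Equiv.symm_apply_eq]
  exact finRotate_last'.symm

/-- The operator `π⁻¹`, given by `X_1 ↦ q X_n` and `X_{i+1} ↦ X_i`. -/
abbrev piInvAlgHom (q : Rˣ) : Laur R n →ₐ[R] Laur R n :=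
  monomialAlgHom (Pi.mulSingle 0 q) (finRotate n).symm

variable (q τ : Rˣ)

lemma semiconjBy_piInvAlgHom_mul_self {m : ℕ} {T T' : Module.End R (Laur R (m + 2))}
    (hT : IsDemazureLusztig τ 0 1 T)
    (hT' : IsDemazureLusztig τ ⟨m, by omega⟩ (Fin.last (m + 1)) T') :
    SemiconjBy ((piInvAlgHom q).toLinearMap * (piInvAlgHom q).toLinearMap) T T' := by
  have h₀ : (finRotate (m + 2)).symm 0 = Fin.last _ := finRotate_symm_zero
  have h₁ : (finRotate (m + 2)).symm 1 = 0 := finRotate_symm_succ (k := 0) (by omega)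
  have hlast : (finRotate (m + 2)).symm (Fin.last (m + 1)) = ⟨m, by omega⟩ :=
    finRotate_symm_succ (Nat.lt_succ_self (m + 1))
  have hsq : ((piInvAlgHom q).toLinearMap * (piInvAlgHom q).toLinearMap :
      Module.End R (Laur R (m + 2))) = (monomialAlgHom
        (Pi.mulSingle 0 q * Pi.mulSingle 0 q ∘ (finRotate _).symm)
        ((finRotate _).symm * (finRotate _).symm)).toLinearMap :=
    LinearMap.ext fun p ↦ monomialAlgHom_monomialAlgHom _ _ _ _ p
  rw [hsq]
  refine hT.semiconjBy_monomialAlgHom ?_ zero_ne_one ?_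
  · rwa [Equiv.Perm.mul_apply, Equiv.Perm.mul_apply, h₀, h₁, h₀, hlast]
  · simp only [Pi.mul_apply, Function.comp_apply, h₀, h₁, Pi.mulSingle_eq_same]
    rw [Pi.mulSingle_eq_of_ne (Fin.last_pos).ne', Pi.mulSingle_eq_of_ne one_ne_zero, mul_comm]

theorem isDoubleAffineHecke_laurent {T : ℕ → Module.End R (Laur R n)}
    (hT : ∀ k (hk : k + 1 < n),
      IsDemazureLusztig τ ⟨k, Nat.lt_of_succ_lt hk⟩ ⟨k + 1, hk⟩ (T k)) :
    IsDoubleAffineHecke (n - 1) ((τ : R) - ↑τ⁻¹) T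
      (fun k ↦ T k + ((↑τ⁻¹ : R) - τ) • (1 : Module.End R (Laur R n))) XOp XinvOp
      (piInvAlgHom q).toLinearMap where
  braid k hk := (hT k (by omega)).braid (hT (k + 1) (by omega)) (by simp) (by simp)
    (by simp; omega)
  commute_T i j hij hj := (hT i (by omega)).commute (hT j (by omega)) (by simp) (by simp)
    (by simp; omega) (by simp; omega) (by simp; omega) (by simp; omega)
  T_mul_inv k hk := by
    rw [mul_add, (hT k (by omega)).mul_self (by simp), mul_smul_comm, mul_one, add_assoc,
      ← add_smul]
    simp
  inv_mul_T k hk := by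
    rw [add_mul, (hT k (by omega)).mul_self (by simp), smul_mul_assoc, one_mul, add_assoc,
      ← add_smul]
    simp
  T_sub_inv k _ := by module
  X_mul_inv i _ := XOp_mul_XinvOp i
  inv_mul_X i _ := by rw [← (commute_XOp_XinvOp i).eq, XOp_mul_XinvOp]
  commute_X i j _ _ := commute_XOp i j
  T_mul_X_mul_T k hk := by
    have hk' : k + 1 < n := by omega
    simpa [XOp, hk', Nat.lt_of_succ_lt hk'] using (hT k hk').mul_mulOp_Xel_mul (by simp)
  commute_T_X k j hk hj hjk hjk' := by
    have hj' : j < n := by have := NeZero.pos n; omega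
    simpa [XOp, hj'] using (hT k (by omega)).commute_mulOp_Xel (by simp) (c := ⟨j, hj'⟩)
      (by simpa using hjk) (by simpa using hjk')
  semiconjBy_p_X k hk := by
    have hk' : k + 1 < n := by omega
    refine LinearMap.ext fun p ↦ ?_
    simp only [Module.End.mul_apply, AlgHom.toLinearMap_apply, XOp_apply hk',
      XOp_apply (Nat.lt_of_succ_lt hk'), map_mul, monomialAlgHom_Xel, finRotate_symm_succ]
    rw [Pi.mulSingle_eq_of_ne (by simp [Fin.ext_iff]), Units.val_one, one_smul]
  semiconjBy_p_T k hk := by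
    have hk' : k + 2 < n := by omega
    refine (hT (k + 1) hk').semiconjBy_monomialAlgHom ?_ (by simp) ?_
    · simpa only [finRotate_symm_succ] using hT k (by omega)
    · simp
  semiconjBy_p_sq_T k hk := by
    obtain rfl : n = k + 2 := by omega
    exact semiconjBy_piInvAlgHom_mul_self q τ (hT 0 (by omega)) (hT k (by omega))

theorem commute_jucysMurphy_laurent {T : ℕ → Module.End R (Laur R n)}
    (hT : ∀ k (hk : k + 1 < n),
      IsDemazureLusztig τ ⟨k, Nat.lt_of_succ_lt hk⟩ ⟨k + 1, hk⟩ (T k))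
    {Y : (Module.End R (Laur R n))ˣ}
    (hY : Y.val = (piInvAlgHom q).toLinearMap *
      aF (fun k ↦ T k + ((↑τ⁻¹ : R) - τ) • (1 : Module.End R (Laur R n))) 0 (n - 1))
    (c : R) {i j : ℕ} (hi : i < n) (hj : j < n) :
    Commute (jucysMurphy (n - 1) T (c • (XinvOp (n - 1) * (Y.val - Y⁻¹.val))) i)
      (jucysMurphy (n - 1) T (c • (XinvOp (n - 1) * (Y.val - Y⁻¹.val))) j) :=
  ((isDoubleAffineHecke_laurent q τ hT).isBraidB_smul_inv_X_mul_sub_inv hY c).commute_jucysMurphy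
    (Nat.le_sub_one_of_lt hi) (Nat.le_sub_one_of_lt hj)

lemma eq_toLinearMap_piInvAlgHom {q : Rˣ} {P : Module.End R (Laur R n)}
    (hP : ∀ a c, P (mono a c) =
      (↑(q ^ a 0) : R) • mono (Finsupp.equivMapDomain (finRotate n).symm a) c) :
    P = (piInvAlgHom q).toLinearMap :=
  linearMap_ext_mono fun a c ↦ by
    rw [hP, AlgHom.toLinearMap_apply, monomialAlgHom_mono, Finset.prod_eq_single 0]
    · rw [Pi.mulSingle_eq_same]
    · intro i _ hi
      rw [Pi.mulSingle_eq_of_ne hi, one_zpow]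
    · simp

end PolynomialRepresentation

theorem statement8_general [NeZero n] (q τ : Rˣ) (c : R)
    (W : Equiv.Perm (Fin n) → Module.End R (Laur R n))
    (hW : ∀ w a r, W w (mono a r) = mono (Finsupp.equivMapDomain w a) r)
    (T Ti : ℕ → Module.End R (Laur R n))
    (hT : ∀ (k : ℕ) (hk : k + 1 < n) (p : Laur R n),
      (Xel ⟨k + 1, hk⟩ - Xel ⟨k, Nat.lt_of_succ_lt hk⟩) * T k p =
        ((↑τ⁻¹ : R) • Xel ⟨k + 1, hk⟩ - (τ : R) • Xel ⟨k, Nat.lt_of_succ_lt hk⟩) *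
            W (Equiv.swap ⟨k, Nat.lt_of_succ_lt hk⟩ ⟨k + 1, hk⟩) p +
          ((τ : R) - ↑τ⁻¹) • (Xel ⟨k + 1, hk⟩ * p))
    (hTi : ∀ k, Ti k = T k + ((↑τ⁻¹ : R) - τ) • (1 : Module.End R (Laur R n)))
    (piInv : Module.End R (Laur R n))
    (hpiInv : ∀ a r, piInv (mono a r) =
      (↑(q ^ a 0) : R) • mono (Finsupp.equivMapDomain (finRotate n).symm a) r)
    (Y : (Module.End R (Laur R n))ˣ) (hY : Y.val = piInv * aF Ti 0 (n - 1))
    (D : ℕ → Module.End R (Laur R n))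
    (hD : ∀ i, D i = jucysMurphy (n - 1) T (c • (XinvOp (n - 1) * (Y.val - Y⁻¹.val))) i)
    (e S : ℕ → ℕ → Module.End R (Laur R n)) (he : ∀ i j, e i j = XOp i * D j)
    (hS : ∀ i j, S i j = D i * XOp j - XOp j * D i) :
    ∀ i j k l : ℕ, i < n → j < n → k < n → l < n →
      (e i j * e k l - e i l * e k j = e i l * S j k - e i j * S l k) ∧
      (e i j * e k l - e k j * e i l = S j k * e i l - S j i * e k l) := by
  intro i j k l _ hj _ hl
  have hDL : ∀ k (hk : k + 1 < n),
      IsDemazureLusztig τ ⟨k, Nat.lt_of_succ_lt hk⟩ ⟨k + 1, hk⟩ (T k) := fun k hk p ↦ by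
    rw [hT k hk p, eq_toLinearMap_permAlgHom (hW _), AlgHom.toLinearMap_apply]
  rw [eq_toLinearMap_piInvAlgHom hpiInv, funext hTi] at hY
  have hDD : Commute (D j) (D l) := by
    rw [hD, hD]
    exact commute_jucysMurphy_laurent q τ hDL hY c hj hl
  simp only [he, hS]
  exact ⟨mul_mul_mul_sub_of_commute_right hDD, mul_mul_mul_sub_of_commute_left (commute_XOp i k)⟩

/-- The quadratic relations among the elements `e_{ij} = X_i D_j`,
with `S^τ_{ij} = [D_i, X_j]` (indices `0`-based). -/
theorem statement8
    (F : Type*) [Field F] (n : ℕ) [NeZero n]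
    (q τ : F) (hq : q ≠ 0) (hqroot : ∀ m : ℕ, m ≠ 0 → q ^ m ≠ 1) (hτ : τ ≠ 0)
    -- the action of the symmetric group permuting the variables
    (W : Equiv.Perm (Fin n) → Module.End F (Laur F n))
    (hW : ∀ (w : Equiv.Perm (Fin n)) (a : Fin n →₀ ℤ) (c : F),
      W w (mono a c) = mono (Finsupp.equivMapDomain w a) c)
    -- the Demazure–Lusztig operators `T_k` and their inverses `Ti k = T k + τ⁻¹ - τ`
    (T Ti : ℕ → Module.End F (Laur F n))
    (hT : ∀ (k : ℕ) (hk : k + 1 < n) (p : Laur F n),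
      (Xel ⟨k + 1, hk⟩ - Xel ⟨k, Nat.lt_of_succ_lt hk⟩) * T k p
        = (τ⁻¹ • Xel ⟨k + 1, hk⟩ - τ • Xel ⟨k, Nat.lt_of_succ_lt hk⟩)
            * W (Equiv.swap ⟨k, Nat.lt_of_succ_lt hk⟩ ⟨k + 1, hk⟩) p
          + (τ - τ⁻¹) • (Xel ⟨k + 1, hk⟩ * p))
    (hTi : ∀ k, Ti k = T k + (τ⁻¹ - τ) • (1 : Module.End F (Laur F n)))
    (hTinv : ∀ k, k + 1 < n → T k * Ti k = 1 ∧ Ti k * T k = 1)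
    -- the operator `π⁻¹`
    (piInv : Module.End F (Laur F n))
    (hpiInv : ∀ (a : Fin n →₀ ℤ) (c : F),
      piInv (mono a c)
        = q ^ (a 0) • mono (Finsupp.equivMapDomain (finRotate n).symm a) c)
    -- the operators `Y_i = T_i ⋯ T_{n-1} ⬝ π⁻¹ ⬝ T_1⁻¹ ⋯ T_{i-1}⁻¹` and their inverses
    (Y Yi : ℕ → Module.End F (Laur F n))
    (hY : ∀ i, Y i = aF T i (n - 1 - i) * piInv * aF Ti 0 i)
    (hYinv : ∀ i, i < n → Y i * Yi i = 1 ∧ Yi i * Y i = 1)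
    -- the `q`-Dunkl-type operators `D_i`
    (D : ℕ → Module.End F (Laur F n))
    (hD : ∀ i, D i = aF T i (n - 1 - i)
        * ((q - q⁻¹)⁻¹ • (XinvOp (n - 1) * (Y (n - 1) - Yi (n - 1))))
        * dF T i (n - 1 - i))
    -- the operators `e_{ij} = X_i · D_j`
    (e : ℕ → ℕ → Module.End F (Laur F n))
    (he : ∀ i j, e i j = XOp i * D j)
    -- the operators `S^τ_{ij} = [D_i, X_j]`
    (S : ℕ → ℕ → Module.End F (Laur F n))
    (hS : ∀ i j, S i j = D i * XOp j - XOp j * D i)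
    :
    ∀ i j k l : ℕ, i < n → j < n → k < n → l < n → i ≠ j → k ≠ l →
      (e i j * e k l - e i l * e k j = e i l * S j k - e i j * S l k) ∧
      (e i j * e k l - e k j * e i l = S j k * e i l - S j i * e k l) := by
  intro i j k l hi hj hk hl _ _
  obtain ⟨hYYi, hYiY⟩ := hYinv (n - 1) (Nat.sub_one_lt (NeZero.ne n))
  exact statement8_general (.mk0 q hq) (.mk0 τ hτ) (q - q⁻¹)⁻¹ W hW T Ti (by simpa using hT)
    (by simpa using hTi) piInv (by simpa using hpiInv) ⟨Y (n - 1), Yi (n - 1), hYYi, hYiY⟩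
    (by simpa [aF] using hY (n - 1)) D hD e S he hS i j k l hi hj hk hl
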